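/- Fix n ≥ 1 and dimensions n_j, m, r_1, …, r_n. For i = 1, …, n let H_i : [0,∞) → ℝ^{n_j×n_j} be continuously differentiable with H_i(t) symmetric and μI ⪯ H_i(t) ⪯ MI (0 < μ ≤ M); let C_i be continuous and bounded with H_i'(t) = C_i(t) + C_i(t)ᵀ; let K_{D_i}, P_i, K be symmetric positive definite; let Y_i : [0,∞) → ℝ^{n_j×m} and W_i : [0,∞) → ℝ^{r_i×m} be continuously differentiable with Y_i, Y_i', W_i, W_i' bounded. Suppose differentiable s_i and ã_i satisfy H_i(t)ṡ_i(t) + (C_i(t) + K_{D_i})s_i(t) = Y_i(t)ã_i(t) and the composite update ã̇_i(t) = −P_i[Y_i(t)ᵀs_i(t) + W_i(t)ᵀW_i(t)ã_i(t) − (K/n)∑_{j=1}^n (ã_j(t) − ã_i(t))]. If the combined family {Y_1, …, Y_n, W_1, …, W_n} is collectively persistently exciting, then every parameter error satisfies ã_i(t) → 0 as t → ∞. -/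

import Mathlib

/-!
The Lyapunov function `V = ½ ∑ᵢ (sᵢᵀ Hᵢ sᵢ + ãᵢᵀ Pᵢ⁻¹ ãᵢ)` satisfies `V' = -f` with

`f = ∑ᵢ (sᵢᵀ K_{Dᵢ} sᵢ + |Wᵢ ãᵢ|²) + (1 / 2n) ∑ᵢ ∑ⱼ (ãⱼ - ãᵢ)ᵀ K (ãⱼ - ãᵢ)`

(`energy_hasDeriv`, `sum_coupling`). Hence `s` and `ã` are bounded, `V` converges, and `f`, a
polynomial in bounded Lipschitz functions, is Lipschitz. Barbalat's lemma (`barbalat`) gives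
`f → 0`, that is `sᵢ → 0`, `Wᵢ ãᵢ → 0` and `ãⱼ - ãᵢ → 0`.

A second use of Barbalat's lemma, for `Hᵢ sᵢ`, gives `Yᵢ ãᵢ → 0`: the derivative
`(Hᵢ sᵢ)' = Yᵢ ãᵢ + (Cᵢᵀ - K_{Dᵢ}) sᵢ` has a Lipschitz first term and a second term tending to
`0`, with no inverse of `Hᵢ` to control.

The update law now shows `ãᵢ' → 0`, so `ãᵢ` is asymptotically constant on windows of length `T`,
and by consensus `Yⱼ ãᵢ → 0` and `Wⱼ ãᵢ → 0` for all `j`. The excitation integral over `[t, t+T]`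
evaluated in the direction `ãᵢ(t)` therefore tends to `0` (`tendsto_dot_gramInt`), while collective
persistency of excitation bounds it below by a multiple of `|ãᵢ(t)|²`.
-/



open Matrix MeasureTheory Filter Topology

/-- The (unnormalized) integral of the Gram matrix `Wᵀ W` over the window `[t, t+T]`. -/
noncomputable def gramInt {P : Type} [Fintype P] {m : ℕ}
    (W : ℝ → Matrix P (Fin m) ℝ) (t T : ℝ) : Matrix (Fin m) (Fin m) ℝ :=
  Matrix.of fun a b => ∫ τ in t..(t + T), ((W τ)ᵀ * W τ) a b

/-! ### Bounded and Lipschitz functions on the half-line -/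

/-- `f` is bounded on `[0,∞)`. -/
def BddHalf (f : ℝ → ℝ) : Prop := ∃ c, 0 ≤ c ∧ ∀ t, 0 ≤ t → |f t| ≤ c

/-- `f` is bounded and Lipschitz on `[0,∞)`. These functions form an algebra, so every polynomial
in the entries of the state and of the regressors inherits the property. -/
def BLHalf (f : ℝ → ℝ) : Prop :=
  BddHalf f ∧ ∃ L, 0 ≤ L ∧ ∀ t u, 0 ≤ t → 0 ≤ u → |f t - f u| ≤ L * |t - u|

lemma BddHalf.of_le {f : ℝ → ℝ} {c : ℝ} (h : ∀ t, 0 ≤ t → |f t| ≤ c) : BddHalf f :=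
  ⟨c, (abs_nonneg _).trans (h 0 le_rfl), h⟩

lemma BddHalf.const (c : ℝ) : BddHalf fun _ => c := .of_le (c := |c|) fun _ _ => le_rfl

lemma BddHalf.neg {f : ℝ → ℝ} (hf : BddHalf f) : BddHalf fun t => -f t := by
  obtain ⟨c, -, h⟩ := hf
  exact .of_le (c := c) fun t ht => by simpa using h t ht

lemma BddHalf.add {f g : ℝ → ℝ} (hf : BddHalf f) (hg : BddHalf g) :
    BddHalf fun t => f t + g t := by
  obtain ⟨c, -, h⟩ := hf
  obtain ⟨d, -, k⟩ := hg
  exact .of_le (c := c + d) fun t ht =>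
    (abs_add_le _ _).trans (add_le_add (h t ht) (k t ht))

lemma BddHalf.sub {f g : ℝ → ℝ} (hf : BddHalf f) (hg : BddHalf g) :
    BddHalf fun t => f t - g t := by
  simpa only [sub_eq_add_neg] using hf.add hg.neg

lemma BddHalf.mul {f g : ℝ → ℝ} (hf : BddHalf f) (hg : BddHalf g) :
    BddHalf fun t => f t * g t := by
  obtain ⟨c, hc, h⟩ := hf
  obtain ⟨d, -, k⟩ := hg
  exact .of_le (c := c * d) fun t ht => by
    rw [abs_mul]; exact mul_le_mul (h t ht) (k t ht) (abs_nonneg _) hc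

lemma BddHalf.sum {ι : Type*} (u : Finset ι) {f : ι → ℝ → ℝ} (hf : ∀ i, BddHalf (f i)) :
    BddHalf fun t => ∑ i ∈ u, f i t := by
  classical
  induction u using Finset.induction_on with
  | empty => simpa using BddHalf.const 0
  | insert a s ha ih => simpa only [Finset.sum_insert ha] using (hf a).add ih

lemma BddHalf.mulVec {k l : Type*} [Fintype l] {A : ℝ → Matrix k l ℝ} {v : ℝ → l → ℝ}
    (hA : ∀ a b, BddHalf fun t => A t a b) (hv : ∀ b, BddHalf fun t => v t b) (a : k) :
    BddHalf fun t => (A t *ᵥ v t) a :=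
  BddHalf.sum _ fun b => (hA a b).mul (hv b)

lemma BLHalf.const (c : ℝ) : BLHalf fun _ => c :=
  ⟨.const c, 0, le_rfl, fun t u _ _ => by simp⟩

lemma BLHalf.neg {f : ℝ → ℝ} (hf : BLHalf f) : BLHalf fun t => -f t := by
  obtain ⟨h0, c, hc, h⟩ := hf
  refine ⟨h0.neg, c, hc, fun t u ht hu => ?_⟩
  rw [show -f t - -f u = -(f t - f u) by ring, abs_neg]
  exact h t u ht hu

lemma BLHalf.add {f g : ℝ → ℝ} (hf : BLHalf f) (hg : BLHalf g) :
    BLHalf fun t => f t + g t := by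
  obtain ⟨h0, c, hc, h⟩ := hf
  obtain ⟨k0, d, hd, k⟩ := hg
  refine ⟨h0.add k0, c + d, add_nonneg hc hd, fun t u ht hu => ?_⟩
  rw [show f t + g t - (f u + g u) = (f t - f u) + (g t - g u) by ring, add_mul]
  exact (abs_add_le _ _).trans (add_le_add (h t u ht hu) (k t u ht hu))

lemma BLHalf.sub {f g : ℝ → ℝ} (hf : BLHalf f) (hg : BLHalf g) :
    BLHalf fun t => f t - g t := by
  simpa only [sub_eq_add_neg] using hf.add hg.neg

lemma BLHalf.mul {f g : ℝ → ℝ} (hf : BLHalf f) (hg : BLHalf g) :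
    BLHalf fun t => f t * g t := by
  obtain ⟨h0, L, hL, h⟩ := hf
  obtain ⟨k0, N, hN, k⟩ := hg
  refine ⟨h0.mul k0, ?_⟩
  obtain ⟨c, hc, hf0⟩ := h0
  obtain ⟨d, hd, hg0⟩ := k0
  refine ⟨c * N + L * d, by positivity, fun t u ht hu => ?_⟩
  rw [show f t * g t - f u * g u = f t * (g t - g u) + (f t - f u) * g u by ring]
  refine (abs_add_le _ _).trans ?_
  rw [abs_mul, abs_mul]
  have h1 := mul_le_mul (hf0 t ht) (k t u ht hu) (abs_nonneg _) hc
  have h2 := mul_le_mul (h t u ht hu) (hg0 u hu) (abs_nonneg _) (by positivity)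
  linarith

lemma BLHalf.sum {ι : Type*} (u : Finset ι) {f : ι → ℝ → ℝ} (hf : ∀ i, BLHalf (f i)) :
    BLHalf fun t => ∑ i ∈ u, f i t := by
  classical
  induction u using Finset.induction_on with
  | empty => simpa using BLHalf.const 0
  | insert a s ha ih => simpa only [Finset.sum_insert ha] using (hf a).add ih

lemma BLHalf.dot {l : Type*} [Fintype l] {v w : ℝ → l → ℝ}
    (hv : ∀ b, BLHalf fun t => v t b) (hw : ∀ b, BLHalf fun t => w t b) :
    BLHalf fun t => v t ⬝ᵥ w t :=
  BLHalf.sum _ fun b => (hv b).mul (hw b)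

lemma BLHalf.mulVec {k l : Type*} [Fintype l] {A : ℝ → Matrix k l ℝ} {v : ℝ → l → ℝ}
    (hA : ∀ a b, BLHalf fun t => A t a b) (hv : ∀ b, BLHalf fun t => v t b) (a : k) :
    BLHalf fun t => (A t *ᵥ v t) a :=
  BLHalf.sum _ fun b => (hA a b).mul (hv b)

lemma BLHalf.of_hasDeriv {f f' : ℝ → ℝ} (hf : BddHalf f) (hf' : BddHalf f')
    (hd : ∀ t, 0 ≤ t → HasDerivWithinAt f (f' t) (Set.Ici 0) t) : BLHalf f := by
  obtain ⟨L, hL, h⟩ := hf'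
  refine ⟨hf, L, hL, fun t u ht hu => ?_⟩
  exact Convex.norm_image_sub_le_of_norm_hasDerivWithin_le (s := Set.Ici (0 : ℝ)) hd h
    (convex_Ici 0) hu ht

/-! ### Limits at infinity -/

lemma tendsto_zero_bdd_mul {f g : ℝ → ℝ} (hf : BddHalf f) (hg : Tendsto g atTop (𝓝 0)) :
    Tendsto (fun t => f t * g t) atTop (𝓝 0) := by
  obtain ⟨c, hc, h⟩ := hf
  have h1 : Tendsto (fun t => c * |g t|) atTop (𝓝 0) := by
    simpa using (hg.abs).const_mul c
  refine squeeze_zero_norm' ?_ h1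
  filter_upwards [eventually_ge_atTop 0] with t ht
  rw [Real.norm_eq_abs, abs_mul]
  exact mul_le_mul_of_nonneg_right (h t ht) (abs_nonneg _)

lemma tendsto_zero_mulVec {k l : Type*} [Fintype l] {A : ℝ → Matrix k l ℝ} {v : ℝ → l → ℝ}
    (hA : ∀ a b, BddHalf fun t => A t a b) (hv : Tendsto v atTop (𝓝 0)) :
    Tendsto (fun t => A t *ᵥ v t) atTop (𝓝 0) := by
  refine tendsto_pi_nhds.2 fun a => ?_
  have := tendsto_finsetSum Finset.univ
    fun b (_ : b ∈ Finset.univ) => tendsto_zero_bdd_mul (hA a b) ((tendsto_pi_nhds.1 hv) b)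
  simpa [Matrix.mulVec, dotProduct] using this

lemma tendsto_zero_of_sq_le {E : Type*} [SeminormedAddCommGroup E] {v : ℝ → E} {f : ℝ → ℝ}
    {p : ℝ} (hp : 0 < p) (hf : Tendsto f atTop (𝓝 0)) (h : ∀ t, 0 ≤ t → p * ‖v t‖ ^ 2 ≤ f t) :
    Tendsto v atTop (𝓝 0) := by
  rw [tendsto_zero_iff_norm_tendsto_zero]
  have h1 : Tendsto (fun t => Real.sqrt (f t / p)) atTop (𝓝 0) := by
    simpa using (hf.div_const p).sqrt
  refine squeeze_zero' (Eventually.of_forall fun t => norm_nonneg _) ?_ h1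
  filter_upwards [eventually_ge_atTop 0] with t ht
  apply Real.le_sqrt_of_sq_le
  rw [le_div_iff₀ hp]
  linarith [h t ht]

/-- A form of Barbalat's lemma: if `F` converges and `F' = f + e` with `f` Lipschitz and `e → 0`,
then `f → 0`. -/
lemma barbalat {F f e : ℝ → ℝ} {l : ℝ} (hF : Tendsto F atTop (𝓝 l)) (hf : BLHalf f)
    (he : Tendsto e atTop (𝓝 0))
    (hd : ∀ t, 0 ≤ t → HasDerivWithinAt F (f t + e t) (Set.Ici 0) t) :
    Tendsto f atTop (𝓝 0) := by
  obtain ⟨-, L, hL, hLip⟩ := hf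
  rw [Metric.tendsto_nhds]
  intro ε hε
  -- over a step of length `h`, `f` moves by at most `L * h < ε / 3`
  set h : ℝ := ε / (3 * (L + 1)) with hh
  have hpos : 0 < h := by positivity
  have hLh : L * h < ε / 3 := by
    have : (L + 1) * h = ε / 3 := by rw [hh]; field_simp
    nlinarith
  have hdiff : Tendsto (fun t => (F (t + h) - F t) / h) atTop (𝓝 0) := by
    have h1 : Tendsto (fun t => F (t + h)) atTop (𝓝 l) :=
      hF.comp (tendsto_atTop_add_const_right _ _ tendsto_id)
    simpa using (h1.sub hF).div_const h
  have e1 := (Metric.tendsto_nhds.1 hdiff) (ε / 3) (by positivity)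
  obtain ⟨t₀, ht₀⟩ := eventually_atTop.1 ((Metric.tendsto_nhds.1 he) (ε / 3) (by positivity))
  filter_upwards [e1, eventually_ge_atTop t₀, eventually_ge_atTop 0] with t h1 h2 h3
  obtain ⟨c, hc, hslope⟩ := exists_hasDerivAt_eq_slope F (fun t => f t + e t)
    (show t < t + h by linarith)
    (fun x hx => ((hd x (h3.trans hx.1)).continuousWithinAt).mono
      fun y hy => h3.trans hy.1)
    (fun x hx => (hd x (h3.trans hx.1.le)).hasDerivAt (Ici_mem_nhds (h3.trans_lt hx.1)))
  have h4 := ht₀ c (h2.trans hc.1.le)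
  have h5 := hLip t c h3 (h3.trans hc.1.le)
  have h6 : |t - c| ≤ h := by rw [abs_le]; constructor <;> linarith [hc.1, hc.2]
  have h7 := mul_le_mul_of_nonneg_left h6 hL
  rw [add_sub_cancel_left] at hslope
  rw [Real.dist_eq, sub_zero] at h1 h4 ⊢
  rw [← hslope] at h1
  simp only [abs_lt, abs_le] at h1 h4 h5 ⊢
  constructor <;> linarith [h1.1, h1.2, h4.1, h4.2, h5.1, h5.2]

/-- A nonnegative function with derivative `-f ≤ 0` on `[0,∞)` stays below its initial value and
converges. -/
lemma tendsto_of_deriv_nonpos {V f : ℝ → ℝ}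
    (hd : ∀ t, 0 ≤ t → HasDerivWithinAt V (-f t) (Set.Ici 0) t) (hf : ∀ t, 0 ≤ t → 0 ≤ f t)
    (hV : ∀ t, 0 ≤ t → 0 ≤ V t) :
    (∀ t, 0 ≤ t → V t ≤ V 0) ∧ ∃ l, Tendsto V atTop (𝓝 l) := by
  have hanti : AntitoneOn V (Set.Ici 0) := by
    refine antitoneOn_of_hasDerivWithinAt_nonpos (f' := fun t => -f t) (convex_Ici 0)
      (fun t ht => (hd t ht).continuousWithinAt) (fun t ht => ?_) (fun t ht => ?_)
    · exact (hd t (interior_subset ht)).mono interior_subset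
    · simpa using hf t (interior_subset ht)
  refine ⟨fun t ht => hanti Set.self_mem_Ici ht ht, ?_⟩
  have hmem : ∀ t : ℝ, max t 0 ∈ Set.Ici (0 : ℝ) := fun t => Set.mem_Ici.2 (le_max_right t 0)
  have h1 : Antitone fun t => V (max t 0) := fun t u htu =>
    hanti (hmem t) (hmem u) (max_le_max_right _ htu)
  have h2 : BddBelow (Set.range fun t => V (max t 0)) :=
    ⟨0, by rintro _ ⟨t, rfl⟩; exact hV _ (le_max_right _ _)⟩
  refine ⟨_, (tendsto_atTop_ciInf h1 h2).congr' ?_⟩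
  filter_upwards [eventually_ge_atTop 0] with t ht
  rw [max_eq_left ht]

/-! ### Quadratic forms -/

lemma norm_sq_le_dot {k : Type*} [Fintype k] (v : k → ℝ) : ‖v‖ ^ 2 ≤ v ⬝ᵥ v := by
  have h0 : 0 ≤ v ⬝ᵥ v := Finset.sum_nonneg fun a _ => mul_self_nonneg _
  have h : ‖v‖ ≤ Real.sqrt (v ⬝ᵥ v) := by
    refine (pi_norm_le_iff_of_nonneg (Real.sqrt_nonneg _)).2 fun a => ?_
    refine Real.le_sqrt_of_sq_le ?_
    rw [Real.norm_eq_abs, sq_abs, sq]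
    exact Finset.single_le_sum (f := fun a => v a * v a) (fun a _ => mul_self_nonneg _)
      (Finset.mem_univ a)
  calc ‖v‖ ^ 2 ≤ Real.sqrt (v ⬝ᵥ v) ^ 2 := by gcongr
    _ = _ := Real.sq_sqrt h0

lemma abs_dot_le {k : Type*} [Fintype k] (v w : k → ℝ) :
    |v ⬝ᵥ w| ≤ Fintype.card k * (‖v‖ * ‖w‖) := by
  refine (Finset.abs_sum_le_sum_abs _ _).trans ?_
  refine (Finset.sum_le_card_nsmul _ _ (‖v‖ * ‖w‖) fun a _ => ?_).trans (by simp)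
  rw [abs_mul]
  exact mul_le_mul (norm_le_pi_norm v a) (norm_le_pi_norm w a) (abs_nonneg _) (norm_nonneg _)

/-- Coercivity of a positive definite form, by compactness of the unit sphere. -/
lemma Matrix.PosDef.exists_coercive {k : Type*} [Fintype k] {A : Matrix k k ℝ} (hA : A.PosDef) :
    ∃ p > 0, ∀ v : k → ℝ, p * ‖v‖ ^ 2 ≤ v ⬝ᵥ A *ᵥ v := by
  have hcont : Continuous fun v : k → ℝ => v ⬝ᵥ A *ᵥ v := by fun_prop
  rcases (Metric.sphere (0 : k → ℝ) 1).eq_empty_or_nonempty with he | hne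
  · refine ⟨1, one_pos, fun v => ?_⟩
    have hv : v = 0 := by
      by_contra hv
      have : ‖v‖⁻¹ • v ∈ Metric.sphere (0 : k → ℝ) 1 := by
        simp [norm_smul, norm_ne_zero_iff.2 hv]
      simp [he] at this
    simp [hv]
  obtain ⟨x, hx, hmin⟩ := (isCompact_sphere (0 : k → ℝ) 1).exists_isMinOn hne hcont.continuousOn
  have hx0 : x ≠ 0 := by rintro rfl; simp at hx
  refine ⟨x ⬝ᵥ A *ᵥ x, by simpa using hA.dotProduct_mulVec_pos hx0, fun v => ?_⟩
  by_cases hv : v = 0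
  · simp [hv]
  have hn : 0 < ‖v‖ := norm_pos_iff.2 hv
  have h1 : ‖v‖⁻¹ • v ∈ Metric.sphere (0 : k → ℝ) 1 := by simp [norm_smul, hn.ne']
  have h2 : x ⬝ᵥ A *ᵥ x ≤ (‖v‖⁻¹ • v) ⬝ᵥ A *ᵥ (‖v‖⁻¹ • v) := hmin h1
  rw [mulVec_smul, smul_dotProduct, dotProduct_smul, smul_eq_mul, smul_eq_mul] at h2
  calc x ⬝ᵥ A *ᵥ x * ‖v‖ ^ 2 ≤ ‖v‖⁻¹ * (‖v‖⁻¹ * v ⬝ᵥ A *ᵥ v) * ‖v‖ ^ 2 := by gcongr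
    _ = _ := by field_simp

/-- A common coercivity constant for a finite family of positive definite matrices. -/
lemma exists_coercive_family {n : ℕ} {k : Type*} [Fintype k] {A : Fin n → Matrix k k ℝ}
    (hA : ∀ i, (A i).PosDef) : ∃ p > 0, ∀ i (v : k → ℝ), p * ‖v‖ ^ 2 ≤ v ⬝ᵥ A i *ᵥ v := by
  choose p hp h using fun i => (hA i).exists_coercive
  rcases isEmpty_or_nonempty (Fin n) with _ | _
  · exact ⟨1, one_pos, fun i => isEmptyElim i⟩
  obtain ⟨j, hj⟩ := Finite.exists_min p
  exact ⟨p j, hp j, fun i v =>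
    (mul_le_mul_of_nonneg_right (hj i) (by positivity)).trans (h i v)⟩

/-- The entries of a symmetric matrix with `0 ⪯ A ⪯ M I` are at most `M` in absolute value: test
the form on `e_a ± e_b`. -/
lemma abs_entry_le {k : Type*} [Fintype k] [DecidableEq k] {A : Matrix k k ℝ} {M : ℝ}
    (hsym : A.IsSymm) (hlb : ∀ v, 0 ≤ v ⬝ᵥ A *ᵥ v) (hub : ∀ v, v ⬝ᵥ A *ᵥ v ≤ M * v ⬝ᵥ v)
    (a b : k) : |A a b| ≤ M := by
  have hba : A b a = A a b := hsym.apply a b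
  have ha := hub (Pi.single a 1)
  have hb := hub (Pi.single b 1)
  have h1 := hlb (Pi.single a 1 + Pi.single b 1)
  have h2 := hlb (Pi.single a 1 - Pi.single b 1)
  simp [mulVec_add, mulVec_sub, hba] at ha hb h1 h2
  rw [abs_le]
  constructor <;> linarith

/-! ### Differentiation of bilinear expressions -/

lemma hasDeriv_dot {k : Type*} [Fintype k] {v w : ℝ → k → ℝ} {v' w' : k → ℝ} {S : Set ℝ} {t : ℝ}
    (hv : HasDerivWithinAt v v' S t) (hw : HasDerivWithinAt w w' S t) :
    HasDerivWithinAt (fun τ => v τ ⬝ᵥ w τ) (v' ⬝ᵥ w t + v t ⬝ᵥ w') S t := by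
  have := HasDerivWithinAt.fun_sum (u := Finset.univ) fun a (_ : a ∈ Finset.univ) =>
    (hasDerivWithinAt_pi.1 hv a).fun_mul (hasDerivWithinAt_pi.1 hw a)
  simpa only [dotProduct, Finset.sum_add_distrib] using this

lemma hasDeriv_mulVec {k l : Type*} [Fintype k] [Fintype l] {A : ℝ → Matrix k l ℝ}
    {A' : Matrix k l ℝ} {v : ℝ → l → ℝ} {v' : l → ℝ} {S : Set ℝ} {t : ℝ}
    (hA : ∀ a b, HasDerivWithinAt (fun τ => A τ a b) (A' a b) S t)
    (hv : HasDerivWithinAt v v' S t) :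
    HasDerivWithinAt (fun τ => A τ *ᵥ v τ) (A' *ᵥ v t + A t *ᵥ v') S t := by
  refine hasDerivWithinAt_pi.2 fun a => ?_
  exact hasDeriv_dot (v := fun τ => A τ a) (hasDerivWithinAt_pi.2 (hA a)) hv
/-! ### Excitation integrals along a slowly varying direction -/

lemma dot_gramInt {P : Type} [Fintype P] {m : ℕ} {G : ℝ → Matrix P (Fin m) ℝ} {t T : ℝ}
    (hG : ∀ a b, ContinuousOn (fun τ => G τ a b) (Set.Ici 0)) (ht : 0 ≤ t) (hT : 0 ≤ T)
    (v : Fin m → ℝ) :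
    v ⬝ᵥ gramInt G t T *ᵥ v = ∫ τ in t..(t + T), (G τ *ᵥ v) ⬝ᵥ (G τ *ᵥ v) := by
  have hsub : Set.uIcc t (t + T) ⊆ Set.Ici 0 := by
    rw [Set.uIcc_of_le (by linarith)]; exact fun x hx => ht.trans hx.1
  have hint : ∀ a b, IntervalIntegrable (fun τ => ((G τ)ᵀ * G τ) a b) volume t (t + T) := by
    intro a b
    refine (ContinuousOn.mono ?_ hsub).intervalIntegrable
    simp only [Matrix.mul_apply, Matrix.transpose_apply]
    exact continuousOn_finsetSum _ fun c _ => (hG c a).mul (hG c b)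
  have hpt : ∀ τ, (G τ *ᵥ v) ⬝ᵥ (G τ *ᵥ v) = ∑ a, ∑ b, v a * (((G τ)ᵀ * G τ) a b * v b) := by
    intro τ
    rw [← dotProduct_transpose_mulVec, mulVec_mulVec]
    simp only [dotProduct, mulVec, Finset.mul_sum]
  simp_rw [hpt]
  rw [intervalIntegral.integral_finsetSum fun a _ => ?_]
  · simp only [dotProduct, mulVec, Finset.mul_sum]
    refine Finset.sum_congr rfl fun a _ => ?_
    rw [intervalIntegral.integral_finsetSum fun b _ =>
      ((hint a b).mul_const _).const_mul _]
    refine Finset.sum_congr rfl fun b _ => ?_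
    rw [intervalIntegral.integral_const_mul, intervalIntegral.integral_mul_const]
    rfl
  · have := IntervalIntegrable.sum Finset.univ fun b (_ : b ∈ Finset.univ) =>
      ((hint a b).mul_const (v b)).const_mul (v a)
    rwa [Finset.sum_fn] at this

/-- If `G x → 0` and `x' → 0`, the excitation of `G` over `[t, t+T]` in the direction `x t`
vanishes in the limit, because `x` is asymptotically constant over the window. -/
lemma tendsto_dot_gramInt {P : Type} [Fintype P] {m : ℕ} {G : ℝ → Matrix P (Fin m) ℝ} {T : ℝ}
    {x x' : ℝ → Fin m → ℝ} (hG : ∀ a b, ContinuousOn (fun τ => G τ a b) (Set.Ici 0))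
    (hGb : ∃ c, ∀ t, 0 ≤ t → ∀ a b, |G t a b| ≤ c) (hT : 0 < T)
    (hx : ∀ t, 0 ≤ t → HasDerivWithinAt x (x' t) (Set.Ici 0) t)
    (hx' : Tendsto x' atTop (𝓝 0)) (hGx : Tendsto (fun t => G t *ᵥ x t) atTop (𝓝 0)) :
    Tendsto (fun t => x t ⬝ᵥ gramInt G t T *ᵥ x t) atTop (𝓝 0) := by
  obtain ⟨c, hc⟩ := hGb
  have hc' : ∀ t, 0 ≤ t → ∀ a b, |G t a b| ≤ |c| := fun t ht a b =>
    (hc t ht a b).trans (le_abs_self c)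
  set N : ℝ := 1 + m * (|c| * T) with hN
  have hN0 : 0 ≤ N := by positivity
  set B : ℝ := Fintype.card P * (N * N) * T with hB
  have hB0 : 0 ≤ B := by positivity
  -- once `‖G x‖` and `‖x'‖` are below `ε`, the integral is at most `B * ε²`
  have key : ∀ ε > 0, ∀ᶠ t in atTop, |x t ⬝ᵥ gramInt G t T *ᵥ x t| ≤ B * (ε * ε) := by
    intro ε hε
    obtain ⟨t₁, h1⟩ := eventually_atTop.1 ((Metric.tendsto_nhds.1 hx') ε hε)
    obtain ⟨t₂, h2⟩ := eventually_atTop.1 ((Metric.tendsto_nhds.1 hGx) ε hε)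
    filter_upwards [eventually_ge_atTop t₁, eventually_ge_atTop t₂, eventually_ge_atTop 0]
      with t ht1 ht2 ht0
    rw [dot_gramInt hG ht0 hT.le]
    have hpt : ∀ τ ∈ Set.uIoc t (t + T),
        ‖(G τ *ᵥ x t) ⬝ᵥ (G τ *ᵥ x t)‖ ≤ Fintype.card P * (N * N) * (ε * ε) := by
      intro τ hτ
      rw [Set.uIoc_of_le (by linarith)] at hτ
      have hτ0 : 0 ≤ τ := ht0.trans hτ.1.le
      have hslow : ‖x t - x τ‖ ≤ ε * T := by
        have := Convex.norm_image_sub_le_of_norm_hasDerivWithin_le (f := x) (f' := x')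
          (s := Set.Ici t) (C := ε) (x := τ) (y := t)
          (fun y hy => (hx y (ht0.trans hy)).mono (Set.Ici_subset_Ici.2 ht0))
          (fun y hy => by simpa using (h1 y (ht1.trans hy)).le)
          (convex_Ici t) hτ.1.le Set.self_mem_Ici
        refine this.trans (mul_le_mul_of_nonneg_left ?_ hε.le)
        rw [Real.norm_eq_abs, abs_le]
        constructor <;> linarith [hτ.1, hτ.2]
      have hbound : ‖G τ *ᵥ x t‖ ≤ N * ε := by
        have e : G τ *ᵥ x t = G τ *ᵥ x τ + G τ *ᵥ (x t - x τ) := by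
          rw [← mulVec_add]; congr 1; abel
        have h3 : ‖G τ *ᵥ x τ‖ ≤ ε := by simpa using (h2 τ (ht2.trans hτ.1.le)).le
        have h4 : ‖G τ *ᵥ (x t - x τ)‖ ≤ m * (|c| * (ε * T)) := by
          refine (pi_norm_le_iff_of_nonneg (by positivity)).2 fun a => ?_
          refine (abs_dot_le _ _).trans ?_
          rw [Fintype.card_fin]
          gcongr
          exact (pi_norm_le_iff_of_nonneg (abs_nonneg c)).2 fun b => hc' τ hτ0 a b
        rw [e, hN]
        refine (norm_add_le _ _).trans ?_
        linarith
      refine (abs_dot_le _ _).trans ?_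
      rw [mul_assoc]
      refine mul_le_mul_of_nonneg_left ?_ (Nat.cast_nonneg _)
      calc ‖G τ *ᵥ x t‖ * ‖G τ *ᵥ x t‖ ≤ (N * ε) * (N * ε) := by gcongr
        _ = N * N * (ε * ε) := by ring
    have := intervalIntegral.norm_integral_le_of_norm_le_const hpt
    rw [add_sub_cancel_left, abs_of_pos hT, Real.norm_eq_abs] at this
    rw [hB]
    linarith
  rw [Metric.tendsto_nhds]
  intro δ hδ
  have hr : 0 < δ / (B + 1) := by positivity
  filter_upwards [key _ (Real.sqrt_pos.2 hr)] with t ht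
  rw [Real.mul_self_sqrt hr.le] at ht
  rw [Real.dist_eq, sub_zero]
  refine ht.trans_lt ?_
  rw [← mul_div_assoc, div_lt_iff₀ (by positivity)]
  nlinarith

/-! ### The Lyapunov function -/

/-- The rate at which one robot's energy `½ sᵀHs + ½ ãᵀP⁻¹ã` changes along the closed loop. The
skew-symmetry property cancels the Coriolis term, and `sᵀYã` cancels between the two parts. Here
`c` stands for the coupling term of the update law. -/
lemma energy_hasDeriv {k m r : ℕ} {H C : ℝ → Matrix (Fin k) (Fin k) ℝ}
    {KD : Matrix (Fin k) (Fin k) ℝ} {Y : ℝ → Matrix (Fin k) (Fin m) ℝ}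
    {W : ℝ → Matrix (Fin r) (Fin m) ℝ} {P : Matrix (Fin m) (Fin m) ℝ} {s ds : ℝ → Fin k → ℝ}
    {x : ℝ → Fin m → ℝ} {c : Fin m → ℝ} {t : ℝ} (hP : P.PosDef) (hsymm : (H t).IsSymm)
    (hH : ∀ a b, HasDerivWithinAt (fun τ => H τ a b) ((C t + (C t)ᵀ) a b) (Set.Ici 0) t)
    (hs : HasDerivWithinAt s (ds t) (Set.Ici 0) t)
    (hdyn : H t *ᵥ ds t + (C t + KD) *ᵥ s t = Y t *ᵥ x t)
    (hx : HasDerivWithinAt x (-(P *ᵥ ((Y t)ᵀ *ᵥ s t + (W t)ᵀ *ᵥ (W t *ᵥ x t) - c)))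
      (Set.Ici 0) t) :
    HasDerivWithinAt (fun τ => (s τ ⬝ᵥ H τ *ᵥ s τ + x τ ⬝ᵥ P⁻¹ *ᵥ x τ) / 2)
      (-(s t ⬝ᵥ KD *ᵥ s t) - (W t *ᵥ x t) ⬝ᵥ (W t *ᵥ x t) + x t ⬝ᵥ c) (Set.Ici 0) t := by
  have h1 := hasDeriv_dot hs (hasDeriv_mulVec hH hs)
  have h2 := hasDeriv_dot hx (hasDeriv_mulVec (A := fun _ => P⁻¹) (A' := 0)
    (fun a b => hasDerivWithinAt_const _ _ _) hx)
  refine ((h1.fun_add h2).div_const 2).congr_deriv ?_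
  have hPsymm : (P⁻¹)ᵀ = P⁻¹ := by
    have := hP.inv.isHermitian
    rwa [IsHermitian, conjTranspose_eq_transpose_of_trivial] at this
  have hPP : P⁻¹ * P = 1 := nonsing_inv_mul _ ((isUnit_iff_isUnit_det _).1 hP.isUnit)
  have e1 : ds t ⬝ᵥ H t *ᵥ s t = s t ⬝ᵥ H t *ᵥ ds t := by
    rw [← dotProduct_transpose_mulVec, hsymm.eq]
  set u := (Y t)ᵀ *ᵥ s t + (W t)ᵀ *ᵥ (W t *ᵥ x t) - c with hu
  have e2 : (-(P *ᵥ u)) ⬝ᵥ P⁻¹ *ᵥ x t = -(x t ⬝ᵥ u) := by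
    rw [← dotProduct_transpose_mulVec, hPsymm, mulVec_neg, mulVec_mulVec, hPP, one_mulVec,
      dotProduct_neg]
  have e3 : x t ⬝ᵥ P⁻¹ *ᵥ (-(P *ᵥ u)) = -(x t ⬝ᵥ u) := by
    rw [mulVec_neg, mulVec_mulVec, hPP, one_mulVec, dotProduct_neg]
  have e4 : s t ⬝ᵥ (C t)ᵀ *ᵥ s t = s t ⬝ᵥ C t *ᵥ s t := dotProduct_transpose_mulVec _ _ _
  have e5 : s t ⬝ᵥ H t *ᵥ ds t
      = s t ⬝ᵥ Y t *ᵥ x t - (s t ⬝ᵥ C t *ᵥ s t + s t ⬝ᵥ KD *ᵥ s t) := by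
    rw [← hdyn, dotProduct_add, add_mulVec, dotProduct_add]; ring
  have e6 : x t ⬝ᵥ u
      = s t ⬝ᵥ Y t *ᵥ x t + (W t *ᵥ x t) ⬝ᵥ (W t *ᵥ x t) - x t ⬝ᵥ c := by
    rw [hu, dotProduct_sub, dotProduct_add, dotProduct_transpose_mulVec,
      dotProduct_transpose_mulVec]
  rw [zero_mulVec, zero_add, e2, e3, dotProduct_add, add_mulVec, dotProduct_add, e1, e4, e5, e6]
  ring

/-- Summation by parts for the all-to-all coupling, which turns it into a sum of disagreement
energies. -/
lemma sum_coupling {n m : ℕ} (K : Matrix (Fin m) (Fin m) ℝ) (x : Fin n → Fin m → ℝ) :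
    ∑ i, x i ⬝ᵥ K *ᵥ ∑ j, (x j - x i) =
      -(∑ i, ∑ j, (x j - x i) ⬝ᵥ K *ᵥ (x j - x i)) / 2 := by
  have h1 : ∀ i, x i ⬝ᵥ K *ᵥ ∑ j, (x j - x i) = ∑ j, x i ⬝ᵥ K *ᵥ (x j - x i) := by
    intro i
    rw [show K *ᵥ ∑ j, (x j - x i) = ∑ j, K *ᵥ (x j - x i) from
      map_sum K.mulVecLin _ _, dotProduct_sum]
  have h2 : ∑ i, ∑ j, x j ⬝ᵥ K *ᵥ (x j - x i) = -∑ i, ∑ j, x i ⬝ᵥ K *ᵥ (x j - x i) := by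
    rw [Finset.sum_comm, ← Finset.sum_neg_distrib]
    refine Finset.sum_congr rfl fun i _ => ?_
    rw [← Finset.sum_neg_distrib]
    refine Finset.sum_congr rfl fun j _ => ?_
    rw [← neg_sub (x j) (x i), mulVec_neg, dotProduct_neg]
  have h3 : ∑ i, ∑ j, (x j - x i) ⬝ᵥ K *ᵥ (x j - x i)
      = ∑ i, ∑ j, x j ⬝ᵥ K *ᵥ (x j - x i) - ∑ i, ∑ j, x i ⬝ᵥ K *ᵥ (x j - x i) := by
    simp only [sub_dotProduct, Finset.sum_sub_distrib]
  rw [Finset.sum_congr rfl fun i _ => h1 i, h3, h2]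
  ring

/-! ### Convergence of the parameter errors -/

/-- Theorem 6 of the paper, first part: multi-robot composite adaptive
control with decentralized updates.  For `n` manipulators with error dynamics
`H_i ṡ_i + (C_i + K_{D_i}) s_i = Y_i ã_i` and composite update
`ã̇_i = −P_i [Y_iᵀ s_i + W_iᵀ W_i ã_i − (K/n) ∑ⱼ (ã_j − ã_i)]`, if the combined family
`{Y_1, …, Y_n, W_1, …, W_n}` is collectively persistently exciting, i.e.
`(1/T) ∑ᵢ ∫_t^{t+T} (Y_iᵀ Y_i + W_iᵀ W_i) dτ ⪰ α I` for all `t ≥ 0`, then every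
parameter error satisfies `ã_i → 0` as `t → ∞`. -/
theorem composite_parameter_convergence (n nj m : ℕ) (hn : 1 ≤ n) (r : Fin n → ℕ)
    (H C : Fin n → ℝ → Matrix (Fin nj) (Fin nj) ℝ)
    (KD : Fin n → Matrix (Fin nj) (Fin nj) ℝ)
    (Y dY : Fin n → ℝ → Matrix (Fin nj) (Fin m) ℝ)
    (W : (i : Fin n) → ℝ → Matrix (Fin (r i)) (Fin m) ℝ)
    (dW : (i : Fin n) → ℝ → Matrix (Fin (r i)) (Fin m) ℝ)
    (Pm : Fin n → Matrix (Fin m) (Fin m) ℝ)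
    (K : Matrix (Fin m) (Fin m) ℝ)
    (μ M : ℝ) (hμ : 0 < μ) (hμM : μ ≤ M)
    (s ds : Fin n → ℝ → Fin nj → ℝ) (at' : Fin n → ℝ → Fin m → ℝ)
    -- each `H i t` symmetric with `μ I ⪯ H i t ⪯ M I`, continuously differentiable
    (hHsymm : ∀ i t, 0 ≤ t → (H i t).IsSymm)
    (hHlb : ∀ i t, 0 ≤ t → (H i t - μ • 1).PosSemidef)
    (hHub : ∀ i t, 0 ≤ t → ((M • 1 : Matrix (Fin nj) (Fin nj) ℝ) - H i t).PosSemidef)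
    (hHd : ∀ i, ∀ t, 0 ≤ t → ∀ a b,
      HasDerivWithinAt (fun τ => H i τ a b) ((C i t + (C i t)ᵀ) a b) (Set.Ici 0) t)
    -- each `C i` continuous and bounded
    (hCc : ∀ i a b, ContinuousOn (fun t => C i t a b) (Set.Ici 0))
    (hCbd : ∃ c, ∀ i, ∀ t, 0 ≤ t → ∀ a b, |C i t a b| ≤ c)
    -- the gains are symmetric positive definite
    (hKD : ∀ i, (KD i).PosDef) (hPm : ∀ i, (Pm i).PosDef) (hK : K.PosDef)
    -- each `Y i`, `W i` continuously differentiable with themselves and derivatives bounded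
    (hYd : ∀ i, ∀ t, 0 ≤ t → ∀ a b,
      HasDerivWithinAt (fun τ => Y i τ a b) (dY i t a b) (Set.Ici 0) t)
    (hdYc : ∀ i a b, ContinuousOn (fun t => dY i t a b) (Set.Ici 0))
    (hYbd : ∃ c, ∀ i, ∀ t, 0 ≤ t → ∀ a b, |Y i t a b| ≤ c ∧ |dY i t a b| ≤ c)
    (hWd : ∀ i, ∀ t, 0 ≤ t → ∀ a b,
      HasDerivWithinAt (fun τ => W i τ a b) (dW i t a b) (Set.Ici 0) t)
    (hdWc : ∀ i a b, ContinuousOn (fun t => dW i t a b) (Set.Ici 0))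
    (hWbd : ∃ c, ∀ i, ∀ t, 0 ≤ t → ∀ a b, |W i t a b| ≤ c ∧ |dW i t a b| ≤ c)
    -- closed-loop dynamics and composite decentralized update law
    (hs : ∀ i, ∀ t, 0 ≤ t → HasDerivWithinAt (s i) (ds i t) (Set.Ici 0) t)
    (hdyn : ∀ i, ∀ t, 0 ≤ t →
      H i t *ᵥ ds i t + (C i t + KD i) *ᵥ s i t = Y i t *ᵥ at' i t)
    (hat : ∀ i, ∀ t, 0 ≤ t →
      HasDerivWithinAt (at' i)
        (-(Pm i *ᵥ ((Y i t)ᵀ *ᵥ s i t + (W i t)ᵀ *ᵥ (W i t *ᵥ at' i t) -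
          (n : ℝ)⁻¹ • (K *ᵥ ∑ j, (at' j t - at' i t))))) (Set.Ici 0) t)
    -- collective persistency of excitation of the combined family `{Y_i} ∪ {W_i}`
    (hPE : ∃ T > (0:ℝ), ∃ α > (0:ℝ), ∀ t, 0 ≤ t →
      (T⁻¹ • ((∑ i, gramInt (Y i) t T) + ∑ i, gramInt (W i) t T) -
        α • (1 : Matrix (Fin m) (Fin m) ℝ)).PosSemidef) :
    ∀ i, Tendsto (at' i) atTop (𝓝 0) := by
  obtain ⟨pK, hpK, hKc⟩ := hK.exists_coercive
  obtain ⟨pD, hpD, hDc⟩ := exists_coercive_family hKD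
  obtain ⟨pP, hpP, hPc⟩ := exists_coercive_family fun i => (hPm i).inv
  obtain ⟨T, hT, α, hα, hPE⟩ := hPE
  obtain ⟨cY, hcY⟩ := hYbd
  obtain ⟨cW, hcW⟩ := hWbd
  obtain ⟨cC, hcC⟩ := hCbd
  have hn0 : (0 : ℝ) < n := by exact_mod_cast hn
  have hHl : ∀ i t, 0 ≤ t → ∀ v, μ * v ⬝ᵥ v ≤ v ⬝ᵥ H i t *ᵥ v := by
    intro i t ht v
    have := (hHlb i t ht).dotProduct_mulVec_nonneg v
    simp only [star_trivial, sub_mulVec, dotProduct_sub, smul_mulVec, one_mulVec, dotProduct_smul,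
      smul_eq_mul] at this
    linarith
  have hHu : ∀ i t, 0 ≤ t → ∀ v, v ⬝ᵥ H i t *ᵥ v ≤ M * v ⬝ᵥ v := by
    intro i t ht v
    have := (hHub i t ht).dotProduct_mulVec_nonneg v
    simp only [star_trivial, sub_mulVec, dotProduct_sub, smul_mulVec, one_mulVec, dotProduct_smul,
      smul_eq_mul] at this
    linarith
  have hWW : ∀ i t, 0 ≤ (W i t *ᵥ at' i t) ⬝ᵥ (W i t *ᵥ at' i t) := fun i t =>
    (sq_nonneg _).trans (norm_sq_le_dot _)
  -- `f` is the dissipation, the negative of the derivative of the Lyapunov function `V`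
  set f : ℝ → ℝ := fun t =>
    ∑ i, (s i t ⬝ᵥ KD i *ᵥ s i t + (W i t *ᵥ at' i t) ⬝ᵥ (W i t *ᵥ at' i t)) +
      (2 * n : ℝ)⁻¹ * ∑ i, ∑ j, (at' j t - at' i t) ⬝ᵥ K *ᵥ (at' j t - at' i t) with hf
  set V : ℝ → ℝ := fun t =>
    ∑ i, (s i t ⬝ᵥ H i t *ᵥ s i t + at' i t ⬝ᵥ (Pm i)⁻¹ *ᵥ at' i t) / 2 with hVdef
  have hVd : ∀ t, 0 ≤ t → HasDerivWithinAt V (-f t) (Set.Ici 0) t := by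
    intro t ht
    refine (HasDerivWithinAt.fun_sum fun i _ => energy_hasDeriv (hPm i) (hHsymm i t ht)
      (hHd i t ht) (hs i t ht) (hdyn i t ht) (hat i t ht)).congr_deriv ?_
    have h := sum_coupling K fun i => at' i t
    rw [Finset.sum_add_distrib, Finset.sum_sub_distrib, Finset.sum_neg_distrib]
    simp_rw [dotProduct_smul, smul_eq_mul]
    rw [← Finset.mul_sum, h]
    simp only [hf]
    rw [Finset.sum_add_distrib]
    field_simp
    ring
  have hsnn : ∀ i t, 0 ≤ s i t ⬝ᵥ KD i *ᵥ s i t := fun i t =>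
    le_trans (by positivity) (hDc i (s i t))
  have hKnn : ∀ v, 0 ≤ v ⬝ᵥ K *ᵥ v := fun v => le_trans (by positivity) (hKc v)
  have hfs : ∀ i t, pD * ‖s i t‖ ^ 2 ≤ f t := by
    intro i t
    have h1 := Finset.single_le_sum
      (f := fun i => s i t ⬝ᵥ KD i *ᵥ s i t + (W i t *ᵥ at' i t) ⬝ᵥ (W i t *ᵥ at' i t))
      (fun i _ => add_nonneg (hsnn i t) (hWW i t)) (Finset.mem_univ i)
    have h2 : 0 ≤ (2 * n : ℝ)⁻¹ * ∑ i, ∑ j, (at' j t - at' i t) ⬝ᵥ K *ᵥ (at' j t - at' i t) :=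
      mul_nonneg (by positivity) (Finset.sum_nonneg fun i _ => Finset.sum_nonneg fun j _ => hKnn _)
    have h3 := hDc i (s i t)
    have h4 := hWW i t
    simp only [hf]
    linarith
  have hfW : ∀ i t, 1 * ‖W i t *ᵥ at' i t‖ ^ 2 ≤ f t := by
    intro i t
    have h1 := Finset.single_le_sum
      (f := fun i => s i t ⬝ᵥ KD i *ᵥ s i t + (W i t *ᵥ at' i t) ⬝ᵥ (W i t *ᵥ at' i t))
      (fun i _ => add_nonneg (hsnn i t) (hWW i t)) (Finset.mem_univ i)
    have h2 : 0 ≤ (2 * n : ℝ)⁻¹ * ∑ i, ∑ j, (at' j t - at' i t) ⬝ᵥ K *ᵥ (at' j t - at' i t) :=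
      mul_nonneg (by positivity) (Finset.sum_nonneg fun i _ => Finset.sum_nonneg fun j _ => hKnn _)
    have h3 := hsnn i t
    have h4 := norm_sq_le_dot (W i t *ᵥ at' i t)
    simp only [hf]
    linarith
  have hfK : ∀ i j t, (2 * n : ℝ)⁻¹ * pK * ‖at' j t - at' i t‖ ^ 2 ≤ f t := by
    intro i j t
    have h1 : 0 ≤ ∑ i, (s i t ⬝ᵥ KD i *ᵥ s i t + (W i t *ᵥ at' i t) ⬝ᵥ (W i t *ᵥ at' i t)) :=
      Finset.sum_nonneg fun i _ => add_nonneg (hsnn i t) (hWW i t)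
    have h2 := Finset.single_le_sum
      (f := fun j => (at' j t - at' i t) ⬝ᵥ K *ᵥ (at' j t - at' i t))
      (fun j _ => hKnn _) (Finset.mem_univ j)
    have h3 := Finset.single_le_sum
      (f := fun i => ∑ j, (at' j t - at' i t) ⬝ᵥ K *ᵥ (at' j t - at' i t))
      (fun i _ => Finset.sum_nonneg fun j _ => hKnn _) (Finset.mem_univ i)
    have h4 := mul_le_mul_of_nonneg_left ((hKc (at' j t - at' i t)).trans (h2.trans h3))
      (by positivity : 0 ≤ (2 * n : ℝ)⁻¹)
    simp only [hf]
    linarith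
  have hf0 : ∀ t, 0 ≤ f t := fun t => le_trans (by positivity) (hfs ⟨0, hn⟩ t)
  have hVi : ∀ i t, 0 ≤ t → (μ * ‖s i t‖ ^ 2 + pP * ‖at' i t‖ ^ 2) / 2 ≤
      (s i t ⬝ᵥ H i t *ᵥ s i t + at' i t ⬝ᵥ (Pm i)⁻¹ *ᵥ at' i t) / 2 := by
    intro i t ht
    have h1 := hHl i t ht (s i t)
    have h2 := hPc i (at' i t)
    have h3 := mul_le_mul_of_nonneg_left (norm_sq_le_dot (s i t)) hμ.le
    linarith
  have hVle : ∀ i t, 0 ≤ t → (μ * ‖s i t‖ ^ 2 + pP * ‖at' i t‖ ^ 2) / 2 ≤ V t := by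
    intro i t ht
    refine (hVi i t ht).trans ?_
    exact Finset.single_le_sum
      (f := fun i => (s i t ⬝ᵥ H i t *ᵥ s i t + at' i t ⬝ᵥ (Pm i)⁻¹ *ᵥ at' i t) / 2)
      (fun i _ => le_trans (by positivity) (hVi i t ht)) (Finset.mem_univ i)
  obtain ⟨hVb, l, hVlim⟩ := tendsto_of_deriv_nonpos hVd (fun t _ => hf0 t)
    fun t ht => le_trans (by positivity) (hVle ⟨0, hn⟩ t ht)
  have hsB : ∀ i a, BddHalf fun t => s i t a := by
    intro i a
    refine .of_le (c := Real.sqrt (2 * V 0 / μ)) fun t ht => ?_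
    refine (norm_le_pi_norm (s i t) a).trans (Real.le_sqrt_of_sq_le ?_)
    rw [le_div_iff₀ hμ]
    have h1 := (hVle i t ht).trans (hVb t ht)
    have h2 : 0 ≤ pP * ‖at' i t‖ ^ 2 := by positivity
    linarith
  have haB : ∀ i a, BddHalf fun t => at' i t a := by
    intro i a
    refine .of_le (c := Real.sqrt (2 * V 0 / pP)) fun t ht => ?_
    refine (norm_le_pi_norm (at' i t) a).trans (Real.le_sqrt_of_sq_le ?_)
    rw [le_div_iff₀ hpP]
    have h1 := (hVle i t ht).trans (hVb t ht)
    have h2 : 0 ≤ μ * ‖s i t‖ ^ 2 := by positivity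
    linarith
  have hYB : ∀ i a b, BddHalf fun t => Y i t a b := fun i a b =>
    .of_le fun t ht => (hcY i t ht a b).1
  have hWB : ∀ i a b, BddHalf fun t => W i t a b := fun i a b =>
    .of_le fun t ht => (hcW i t ht a b).1
  have hCB : ∀ i a b, BddHalf fun t => C i t a b := fun i a b => .of_le fun t ht => hcC i t ht a b
  have hHB : ∀ i a b, BddHalf fun t => H i t a b := fun i a b => .of_le fun t ht =>
    abs_entry_le (hHsymm i t ht) (fun v => le_trans
      (mul_nonneg hμ.le ((sq_nonneg _).trans (norm_sq_le_dot v))) (hHl i t ht v))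
      (hHu i t ht) a b
  have hYL : ∀ i a b, BLHalf fun t => Y i t a b := fun i a b =>
    .of_hasDeriv (hYB i a b) (.of_le fun t ht => (hcY i t ht a b).2) fun t ht => hYd i t ht a b
  have hWL : ∀ i a b, BLHalf fun t => W i t a b := fun i a b =>
    .of_hasDeriv (hWB i a b) (.of_le fun t ht => (hcW i t ht a b).2) fun t ht => hWd i t ht a b
  have haL : ∀ i a, BLHalf fun t => at' i t a := by
    intro i a
    refine .of_hasDeriv (haB i a) ?_ fun t ht => hasDerivWithinAt_pi.1 (hat i t ht) a
    refine (BddHalf.mulVec (A := fun _ => Pm i) (fun a b => .const _) (fun b => ?_) a).neg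
    refine ((BddHalf.mulVec (A := fun t => (Y i t)ᵀ) (fun a b => hYB i b a) (hsB i) b).add
      (BddHalf.mulVec (A := fun t => (W i t)ᵀ) (fun a b => hWB i b a)
        (fun a => BddHalf.mulVec (hWB i) (haB i) a) b)).sub ((BddHalf.const _).mul ?_)
    refine BddHalf.mulVec (A := fun _ => K) (fun a b => .const _) (fun b => ?_) b
    simp only [Finset.sum_apply, Pi.sub_apply]
    exact BddHalf.sum _ fun j => (haB j b).sub (haB i b)
  have hdsB : ∀ i a, BddHalf fun t => ds i t a := by
    intro i a
    have hg : ∀ a, BddHalf fun t => (Y i t *ᵥ at' i t - (C i t + KD i) *ᵥ s i t) a := fun a =>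
      (BddHalf.mulVec (hYB i) (haB i) a).sub
        (BddHalf.mulVec (A := fun t => C i t + KD i) (fun a b => (hCB i a b).add (.const _))
          (hsB i) a)
    choose g hg0 hg using hg
    refine .of_le (c := nj * (∑ a, g a) / μ) fun t ht => (norm_le_pi_norm (ds i t) a).trans ?_
    rw [le_div_iff₀ hμ]
    -- testing the dynamics against `ds` bounds `ds` without inverting `H`
    have h1 : μ * ‖ds i t‖ ^ 2 ≤ nj * (‖ds i t‖ * ∑ a, g a) := by
      have h2 : ‖Y i t *ᵥ at' i t - (C i t + KD i) *ᵥ s i t‖ ≤ ∑ a, g a :=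
        (pi_norm_le_iff_of_nonneg (Finset.sum_nonneg fun a _ => hg0 a)).2 fun a =>
          (hg a t ht).trans (Finset.single_le_sum (fun a _ => hg0 a) (Finset.mem_univ a))
      have h3 := hHl i t ht (ds i t)
      have h4 := mul_le_mul_of_nonneg_left (norm_sq_le_dot (ds i t)) hμ.le
      have h5 := (le_abs_self _).trans
        (abs_dot_le (ds i t) (Y i t *ᵥ at' i t - (C i t + KD i) *ᵥ s i t))
      rw [← hdyn i t ht, add_sub_cancel_right, Fintype.card_fin] at h5
      rw [← hdyn i t ht, add_sub_cancel_right] at h2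
      have h6 : (nj : ℝ) * (‖ds i t‖ * ‖H i t *ᵥ ds i t‖) ≤ nj * (‖ds i t‖ * ∑ a, g a) := by
        gcongr
      linarith
    rcases (norm_nonneg (ds i t)).eq_or_lt with h | h
    · rw [← h, zero_mul]
      exact mul_nonneg (Nat.cast_nonneg _) (Finset.sum_nonneg fun a _ => hg0 a)
    · refine le_of_mul_le_mul_left ?_ h
      linarith
  have hsL : ∀ i a, BLHalf fun t => s i t a := fun i a =>
    .of_hasDeriv (hsB i a) (hdsB i a) fun t ht => hasDerivWithinAt_pi.1 (hs i t ht) a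
  have hfL : BLHalf f := by
    refine (BLHalf.sum _ fun i => ?_).add ((BLHalf.const _).mul
      (BLHalf.sum _ fun i => BLHalf.sum _ fun j => ?_))
    · have hWa := fun a => BLHalf.mulVec (hWL i) (haL i) a
      exact (BLHalf.dot (hsL i)
        (BLHalf.mulVec (A := fun _ => KD i) (fun a b => .const _) (hsL i))).add
        (BLHalf.dot hWa hWa)
    · have hd : ∀ a, BLHalf fun t => (at' j t - at' i t) a := fun a => (haL j a).sub (haL i a)
      exact BLHalf.dot hd (BLHalf.mulVec (A := fun _ => K) (fun a b => .const _) hd)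
  have hflim : Tendsto f atTop (𝓝 0) := by
    have := barbalat (f := fun t => -f t) (e := fun _ => 0) hVlim hfL.neg tendsto_const_nhds
      fun t ht => by simpa using hVd t ht
    simpa using this.neg
  have hslim : ∀ i, Tendsto (s i) atTop (𝓝 0) := fun i =>
    tendsto_zero_of_sq_le hpD hflim fun t _ => hfs i t
  have hWlim : ∀ i, Tendsto (fun t => W i t *ᵥ at' i t) atTop (𝓝 0) := fun i =>
    tendsto_zero_of_sq_le one_pos hflim fun t _ => hfW i t
  have hKlim : ∀ i j, Tendsto (fun t => at' j t - at' i t) atTop (𝓝 0) := fun i j =>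
    tendsto_zero_of_sq_le (by positivity) hflim fun t _ => hfK i j t
  -- `(H s)' = Y ã + (Cᵀ - KD) s`, where `H s → 0` and the last term vanishes in the limit
  have hYlim : ∀ i, Tendsto (fun t => Y i t *ᵥ at' i t) atTop (𝓝 0) := by
    intro i
    have hHs := tendsto_zero_mulVec (hHB i) (hslim i)
    have he := tendsto_zero_mulVec (A := fun t => (C i t)ᵀ - KD i)
      (fun a b => (hCB i b a).sub (.const _)) (hslim i)
    refine tendsto_pi_nhds.2 fun a => ?_
    refine barbalat (tendsto_pi_nhds.1 hHs a) (BLHalf.mulVec (hYL i) (haL i) a)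
      (tendsto_pi_nhds.1 he a) fun t ht => ?_
    refine (hasDerivWithinAt_pi.1 (hasDeriv_mulVec (hHd i t ht) (hs i t ht)) a).congr_deriv ?_
    rw [← Pi.add_apply, ← hdyn i t ht]
    refine congrFun ?_ a
    simp only [add_mulVec, sub_mulVec]
    abel
  have hdlim : ∀ i, Tendsto (fun t => -(Pm i *ᵥ ((Y i t)ᵀ *ᵥ s i t +
      (W i t)ᵀ *ᵥ (W i t *ᵥ at' i t) - (n : ℝ)⁻¹ • (K *ᵥ ∑ j, (at' j t - at' i t)))))
      atTop (𝓝 0) := by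
    intro i
    have h1 := tendsto_zero_mulVec (A := fun t => (Y i t)ᵀ) (fun a b => hYB i b a) (hslim i)
    have h2 := tendsto_zero_mulVec (A := fun t => (W i t)ᵀ) (fun a b => hWB i b a) (hWlim i)
    have h3 : Tendsto (fun t => ∑ j, (at' j t - at' i t)) atTop (𝓝 0) := by
      simpa using tendsto_finsetSum Finset.univ fun j _ => hKlim i j
    have h4 := (tendsto_zero_mulVec (A := fun _ => K) (fun a b => .const _) h3).const_smul
      (n : ℝ)⁻¹
    have h5 : Tendsto (fun t => (Y i t)ᵀ *ᵥ s i t + (W i t)ᵀ *ᵥ (W i t *ᵥ at' i t) -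
        (n : ℝ)⁻¹ • (K *ᵥ ∑ j, (at' j t - at' i t))) atTop (𝓝 0) := by
      simpa using (h1.add h2).sub h4
    simpa using (tendsto_zero_mulVec (A := fun _ => Pm i) (fun a b => .const _) h5).neg
  intro i
  -- by consensus, every regressor of the family annihilates `ã_i` in the limit
  have hcross : ∀ {k : ℕ} (G : ℝ → Matrix (Fin k) (Fin m) ℝ) (j : Fin n),
      (∀ a b, BddHalf fun t => G t a b) → Tendsto (fun t => G t *ᵥ at' j t) atTop (𝓝 0) →
      Tendsto (fun t => G t *ᵥ at' i t) atTop (𝓝 0) := by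
    intro k G j hG h
    have := h.add (tendsto_zero_mulVec hG (hKlim j i))
    simpa [← mulVec_add] using this
  have hgY : ∀ j, Tendsto (fun t => at' i t ⬝ᵥ gramInt (Y j) t T *ᵥ at' i t) atTop (𝓝 0) :=
    fun j => tendsto_dot_gramInt
      (fun a b t ht => (hYd j t ht a b).continuousWithinAt)
      ⟨cY, fun t ht a b => (hcY j t ht a b).1⟩ hT (hat i) (hdlim i)
      (hcross (Y j) j (hYB j) (hYlim j))
  have hgW : ∀ j, Tendsto (fun t => at' i t ⬝ᵥ gramInt (W j) t T *ᵥ at' i t) atTop (𝓝 0) :=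
    fun j => tendsto_dot_gramInt
      (fun a b t ht => (hWd j t ht a b).continuousWithinAt)
      ⟨cW, fun t ht a b => (hcW j t ht a b).1⟩ hT (hat i) (hdlim i)
      (hcross (W j) j (hWB j) (hWlim j))
  have hsum : Tendsto (fun t => T⁻¹ * (∑ j, at' i t ⬝ᵥ gramInt (Y j) t T *ᵥ at' i t +
      ∑ j, at' i t ⬝ᵥ gramInt (W j) t T *ᵥ at' i t)) atTop (𝓝 0) := by
    simpa using ((tendsto_finsetSum Finset.univ fun j _ => hgY j).add
      (tendsto_finsetSum Finset.univ fun j _ => hgW j)).const_mul T⁻¹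
  refine tendsto_zero_of_sq_le hα hsum fun t ht => ?_
  have h1 := (hPE t ht).dotProduct_mulVec_nonneg (at' i t)
  have h2 := mul_le_mul_of_nonneg_left (norm_sq_le_dot (at' i t)) hα.le
  simp only [star_trivial, sub_mulVec, dotProduct_sub, smul_mulVec, one_mulVec, dotProduct_smul,
    smul_eq_mul, add_mulVec, sum_mulVec, dotProduct_add, dotProduct_sum] at h1
  linarith
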